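/- Let F be a number field in which the prime number p is unramified, and let n ≥ 1. Then there exist infinitely many prime numbers q such that q ≡ 1 (mod pⁿ) and q splits completely in F, i.e. the ideal q𝓞_F factors as a product of [F : ℚ] distinct prime ideals of 𝓞_F each with residue field of cardinality q. -/

import Mathlib

open NumberField

/-!
Put `m = pⁿ`. Let `L / ℚ` be a finite Galois extension containing `F` and a primitive `m`-th root of
unity, and let `θ` be an integral primitive element of `L`. By Schur's argument `minpoly ℤ θ` has a
root modulo `q` for infinitely many primes `q`, and away from the conductor of `ℤ[θ]` such a root is
the same as a ring homomorphism `φ : 𝓞 L → 𝔽_q`. For `q` large, the image under `φ` of the root of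
unity still has order `m`, so `q ≡ 1 (mod m)`, and the `[F : ℚ]` embeddings `F → L` stay distinct
after composition with `φ`; the kernels of the composites are then `[F : ℚ]` primes of norm `q`.
-/

open Polynomial Filter

section PrimeDivisorsOfPolynomialValues

/- Writing `c = f 0 ≠ 0`, the value `f (c N k)` is `c u` with `u ≡ 1 (mod N)`, and `u ≠ ±1` once
`k` is large. -/
theorem exists_prime_not_dvd_and_dvd_eval {f : ℤ[X]} (hf : 0 < f.degree) {N : ℕ} (hN : N ≠ 0) :
    ∃ q : ℕ, q.Prime ∧ ¬ q ∣ N ∧ ∃ a : ℤ, (q : ℤ) ∣ f.eval a := by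
  rcases eq_or_ne (f.eval 0) 0 with h0 | h0
  · obtain ⟨q, hNq, hq⟩ := Nat.exists_infinite_primes (N + 1)
    exact ⟨q, hq, Nat.not_dvd_of_pos_of_lt (Nat.pos_of_ne_zero hN) hNq, 0, by simp [h0]⟩
  set c := f.eval 0
  obtain ⟨k, hk⟩ : ∃ k : ℕ, ‖c‖ < ‖f.eval (c * N * k)‖ := by
    have hz : Tendsto (fun k : ℕ ↦ ‖c * N * k‖) atTop atTop := by
      simp only [norm_mul, Int.norm_natCast]
      exact tendsto_natCast_atTop_atTop.const_mul_atTop (by positivity)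
    exact ((f.tendsto_norm_atTop hf hz).eventually_gt_atTop ‖c‖).exists
  obtain ⟨t, ht⟩ : c * N * k ∣ f.eval (c * N * k) - c := by
    simpa using f.sub_dvd_eval_sub (c * N * k) 0
  have hfactor : f.eval (c * N * k) = c * (1 + N * (k * t)) := by linear_combination ht
  have hnotunit : (1 + N * (k * t)).natAbs ≠ 1 := fun h ↦ by
    rw [hfactor, norm_mul, Int.norm_eq_abs (1 + _), ← Int.cast_abs, Int.abs_eq_natAbs, h] at hk
    simp at hk
  obtain ⟨q, hq, hqu⟩ := Int.exists_prime_and_dvd hnotunit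
  refine ⟨q.natAbs, Int.prime_iff_natAbs_prime.mp hq, fun hqN ↦ hq.not_dvd_one ?_, c * N * k, ?_⟩
  · exact (Int.dvd_add_left ((Int.natAbs_dvd_natAbs.mp hqN).mul_right _)).mp hqu
  · exact Int.natAbs_dvd.mpr (hfactor ▸ hqu.mul_left c)

theorem frequently_prime_and_exists_isRoot_map {f : ℤ[X]} (hf : 0 < f.degree) :
    ∃ᶠ q : ℕ in atTop, q.Prime ∧ ∃ a, (f.map (Int.castRingHom (ZMod q))).IsRoot a := by
  refine frequently_atTop.mpr fun b ↦ ?_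
  obtain ⟨q, hq, hqb, a, ha⟩ := exists_prime_not_dvd_and_dvd_eval hf b.factorial_ne_zero
  refine ⟨q, (not_le.mp (mt hq.dvd_factorial.mpr hqb)).le, hq, a, ?_⟩
  rwa [IsRoot.def, eval_intCast_map, eq_intCast, ZMod.intCast_zmod_eq_zero_iff_dvd]

end PrimeDivisorsOfPolynomialValues

section IntegralPrimitiveElement

variable (R K L S : Type*) [CommRing R] [Field K] [Field L] [CommRing S]
  [Algebra R K] [IsFractionRing R K] [Algebra K L] [FiniteDimensional K L]
  [Algebra.IsSeparable K L] [Algebra R L] [IsScalarTower R K L] [Algebra S L]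
  [IsIntegralClosure S R L]

theorem exists_adjoin_algebraMap_eq_top [IsDomain R] :
    ∃ θ : S, Algebra.adjoin K {algebraMap S L θ} = ⊤ := by
  obtain ⟨α, hα⟩ := Field.exists_primitive_element K L
  obtain ⟨r, hr, hint⟩ := ((IsFractionRing.isAlgebraic_iff R K L).mpr
    (Algebra.IsAlgebraic.isAlgebraic α)).exists_integral_multiple
  obtain ⟨θ, hθ⟩ := (IsIntegralClosure.isIntegral_iff (A := S)).mp hint
  have hrK : algebraMap R K r ≠ 0 := by simpa using hr
  have hαθ : α = (algebraMap R K r)⁻¹ • algebraMap S L θ := by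
    rw [hθ, ← algebraMap_smul K r α, inv_smul_smul₀ hrK]
  refine ⟨θ, ?_⟩
  rw [eq_top_iff, ← IntermediateField.top_toSubalgebra, ← hα,
    IntermediateField.adjoin_simple_toSubalgebra_of_isAlgebraic
      (Algebra.IsAlgebraic.isAlgebraic α)]
  refine Algebra.adjoin_le (Set.singleton_subset_iff.mpr ?_)
  rw [hαθ]
  exact Subalgebra.smul_mem _ (Algebra.self_mem_adjoin_singleton K _) _

variable {S} [Algebra R S] [IsScalarTower R S L]

/- The discriminant of the power basis of `θ` lies in the conductor. -/
theorem comap_conductor_ne_bot [IsIntegrallyClosed R] {θ : S}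
    (hθ : Algebra.adjoin K {algebraMap S L θ} = ⊤) :
    (conductor R θ).comap (algebraMap R S) ≠ ⊥ := by
  have hS (s : S) : IsIntegral R (algebraMap S L s) :=
    (IsIntegralClosure.isIntegral_iff (A := S)).mpr ⟨s, rfl⟩
  let B := PowerBasis.ofAdjoinEqTop (IsIntegral.of_finite K _) hθ
  have hgen : B.gen = algebraMap S L θ := PowerBasis.ofAdjoinEqTop_gen _ _
  have hint : IsIntegral R B.gen := hgen ▸ hS θ
  obtain ⟨d, hd⟩ := IsIntegrallyClosed.isIntegral_iff.mp
    (Algebra.discr_isIntegral (K := K) (R := R) (b := B.basis) fun i ↦ by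
      rw [B.basis_eq_pow]; exact hint.pow _)
  have hd0 : d ≠ 0 := by
    rintro rfl
    exact Algebra.discr_not_zero_of_basis K B.basis (by rw [← hd, map_zero])
  refine (Submodule.ne_bot_iff _).mpr ⟨d, Ideal.mem_comap.mpr fun s ↦ ?_, hd0⟩
  obtain ⟨y, hy, hys⟩ : ∃ y ∈ Algebra.adjoin R {θ},
      algebraMap S L y = algebraMap S L (algebraMap R S d * s) := by
    have h := Algebra.discr_mul_isIntegral_mem_adjoin (R := R) K hint (hS s)
    rwa [hgen, ← hd, algebraMap_smul, Algebra.smul_def, IsScalarTower.algebraMap_apply R S L,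
      ← map_mul, ← IsScalarTower.coe_toAlgHom' R S L, ← AlgHom.map_adjoin_singleton] at h
  exact IsIntegralClosure.algebraMap_injective S R L hys ▸ hy

end IntegralPrimitiveElement

section ExistenceOfRingHoms

variable {K : Type*} [Field K] [NumberField K] {θ : 𝓞 K}

theorem exponent_ne_zero (hθ : Algebra.adjoin ℚ {(θ : K)} = ⊤) : RingOfIntegers.exponent θ ≠ 0 :=
  mt Ideal.absNorm_eq_zero_iff.mp (comap_conductor_ne_bot ℤ ℚ K hθ)

theorem nonempty_ringHom_zmod_of_isRoot {q : ℕ} [Fact q.Prime]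
    (hq : ¬ q ∣ RingOfIntegers.exponent θ) {a : ZMod q}
    (ha : ((minpoly ℤ θ).map (Int.castRingHom (ZMod q))).IsRoot a) :
    Nonempty (𝓞 K →+* ZMod q) := by
  let evalAt : (ZMod q)[X] ⧸ Ideal.span {(minpoly ℤ θ).map (Int.castRingHom (ZMod q))} →+* ZMod q :=
    Ideal.Quotient.lift _ (evalRingHom a) fun _ hf ↦ ha.dvd (Ideal.mem_span_singleton.mp hf)
  let e := RingOfIntegers.ZModXQuotSpanEquivQuotSpan hq
  exact ⟨(evalAt.comp e.symm.toRingHom).comp (Ideal.Quotient.mk _)⟩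

variable (K) in
theorem frequently_prime_and_nonempty_ringHom_zmod :
    ∃ᶠ q : ℕ in atTop, q.Prime ∧ Nonempty (𝓞 K →+* ZMod q) := by
  obtain ⟨θ, hθ⟩ := exists_adjoin_algebraMap_eq_top ℤ ℚ K (𝓞 K)
  refine ((frequently_prime_and_exists_isRoot_map (minpoly.degree_pos θ.isIntegral)).and_eventually
    (eventually_gt_atTop (RingOfIntegers.exponent θ))).mono ?_
  rintro q ⟨⟨hq, a, ha⟩, hlt⟩
  have := Fact.mk hq
  have hndvd := Nat.not_dvd_of_pos_of_lt (Nat.pos_of_ne_zero (exponent_ne_zero hθ)) hlt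
  exact ⟨hq, nonempty_ringHom_zmod_of_isRoot hndvd ha⟩

end ExistenceOfRingHoms

section RingHomsForLargePrimes

variable {S : Type*} [CommRing S] [IsDomain S]

theorem eventually_forall_ringHom_zmod_ne_zero [Algebra.IsIntegral ℤ S] {x : S} (hx : x ≠ 0) :
    ∀ᶠ q : ℕ in atTop, ∀ φ : S →+* ZMod q, φ x ≠ 0 := by
  obtain ⟨N, hN, hN0⟩ := (Submodule.ne_bot_iff _).mp <| Ideal.comap_ne_bot_of_integral_mem hx
    (Ideal.mem_span_singleton_self x) (Algebra.IsIntegral.isIntegral (R := ℤ) x)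
  obtain ⟨y, hy⟩ := Ideal.mem_span_singleton.mp (Ideal.mem_comap.mp hN)
  filter_upwards [eventually_gt_atTop N.natAbs] with q hq φ hφ
  have hqN : (q : ℤ) ∣ N := by
    rw [← ZMod.intCast_zmod_eq_zero_iff_dvd]
    simpa [hφ] using congrArg φ hy
  exact hN0 (Int.eq_zero_of_abs_lt_dvd hqN (by rw [Int.abs_eq_natAbs]; exact_mod_cast hq))

theorem eventually_forall_injective_ringHom_zmod_comp [Algebra.IsIntegral ℤ S] {R ι : Type*}
    [NonAssocSemiring R] [Finite ι] {g : ι → R →+* S} (hg : Function.Injective g) :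
    ∀ᶠ q : ℕ in atTop, ∀ φ : S →+* ZMod q, Function.Injective fun i ↦ φ.comp (g i) := by
  have hpair (i j : ι) (hij : i ≠ j) :
      ∀ᶠ q : ℕ in atTop, ∀ φ : S →+* ZMod q, φ.comp (g i) ≠ φ.comp (g j) := by
    obtain ⟨x, hx⟩ := DFunLike.ne_iff.mp (hg.ne hij)
    filter_upwards [eventually_forall_ringHom_zmod_ne_zero (sub_ne_zero.mpr hx)] with q hq φ h
    exact hq φ (by rw [map_sub, sub_eq_zero]; exact RingHom.congr_fun h x)
  simp_rw [← eventually_all] at hpair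
  filter_upwards [hpair] with q hq φ i j
  exact not_imp_not.mp fun hij ↦ hq i j hij φ

theorem modEq_one_of_isPrimitiveRoot {q m : ℕ} [Fact q.Prime] (hqm : ¬ q ∣ m) {ζ : S}
    (hζ : IsPrimitiveRoot ζ m) (φ : S →+* ZMod q) : q ≡ 1 [MOD m] := by
  have : NeZero (m : ZMod q) := ⟨mt (ZMod.natCast_eq_zero_iff m q).mp hqm⟩
  have hm : m ≠ 0 := fun h ↦ hqm (h ▸ dvd_zero q)
  have hroot : (cyclotomic m (ZMod q)).IsRoot (φ ζ) :=
    map_cyclotomic m φ ▸ (hζ.isRoot_cyclotomic hm.bot_lt).map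
  have hprim : IsPrimitiveRoot (φ ζ) m := isRoot_cyclotomic_iff.mp hroot
  refine ((Nat.modEq_iff_dvd' (Fact.out : q.Prime).one_le).mpr ?_).symm
  exact hprim.dvd_of_pow_eq_one _ (ZMod.pow_card_sub_one_eq_one (hprim.ne_zero hm))

end RingHomsForLargePrimes

section IdealNorm

variable {R : Type*} [CommRing R] [IsDedekindDomain R] [Module.Free ℤ R]

theorem absNorm_ker_ringHom_zmod {q : ℕ} (φ : R →+* ZMod q) :
    Ideal.absNorm (RingHom.ker φ) = q := by
  rw [Ideal.absNorm_apply, Submodule.cardQuot_apply,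
    Nat.card_congr (RingHom.quotientKerEquivOfSurjective (ZMod.ringHom_surjective φ)).toEquiv,
    Nat.card_zmod]

theorem eq_of_dvd_of_absNorm_eq {I J : Ideal R} (hIJ : I ∣ J) (hJ : Ideal.absNorm J ≠ 0)
    (h : Ideal.absNorm I = Ideal.absNorm J) : I = J := by
  obtain ⟨A, rfl⟩ := hIJ
  rw [map_mul] at h hJ
  have hA : Ideal.absNorm A = 1 := (mul_eq_left₀ (left_ne_zero_of_mul hJ)).mp h.symm
  rw [Ideal.absNorm_eq_one_iff.mp hA, Ideal.mul_top]

end IdealNorm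

section SplitsCompletely

/-- The natural number `q` splits completely in the number field `F`: the ideal `q 𝓞_F` is the
product of `[F : ℚ]` distinct primes of norm `q`. The primes are given as a `Finset`, which makes
them distinct. -/
def SplitsCompletely (F : Type*) [Field F] [NumberField F] (q : ℕ) : Prop :=
  ∃ s : Finset (Ideal (𝓞 F)), s.card = Module.finrank ℚ F ∧
    (∀ P ∈ s, P.IsPrime ∧ Ideal.absNorm P = q) ∧
    Ideal.span {(q : 𝓞 F)} = ∏ P ∈ s, P

variable {F : Type*} [Field F] [NumberField F] {q : ℕ}

theorem span_natCast_eq_prod_of_absNorm_eq (hq : q.Prime) {s : Finset (Ideal (𝓞 F))}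
    (hs : s.card = Module.finrank ℚ F) (hP : ∀ P ∈ s, Ideal.absNorm P = q) :
    Ideal.span {(q : 𝓞 F)} = ∏ P ∈ s, P := by
  have hprime : ∀ P ∈ s, Prime P := fun P hPs ↦ UniqueFactorizationMonoid.irreducible_iff_prime.mp
    (Ideal.irreducible_of_irreducible_absNorm (by rwa [hP P hPs]))
  have hnorm : Ideal.absNorm (Ideal.span {(q : 𝓞 F)}) = q ^ Module.finrank ℚ F := by
    rw [Ideal.absNorm_span_natCast, RingOfIntegers.rank]
  refine (eq_of_dvd_of_absNorm_eq (Finset.prod_primes_dvd _ hprime fun P hPs ↦ ?_) ?_ ?_).symm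
  · rw [Ideal.dvd_span_singleton, ← hP P hPs]
    exact Ideal.absNorm_mem P
  · rw [hnorm]
    exact pow_ne_zero _ hq.ne_zero
  · rw [hnorm, map_prod, Finset.prod_congr rfl hP, Finset.prod_const, hs]

theorem splitsCompletely_of_injective [Fact q.Prime] {ι : Type*} [Finite ι]
    (hι : Nat.card ι = Module.finrank ℚ F) {ψ : ι → 𝓞 F →+* ZMod q}
    (hψ : Function.Injective ψ) : SplitsCompletely F q := by
  classical
  have := Fintype.ofFinite ι
  have hker : Function.Injective fun i ↦ RingHom.ker (ψ i) := fun _ _ h ↦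
    hψ (ZMod.ringHom_eq_of_ker_eq _ _ h)
  set s := Finset.univ.image fun i ↦ RingHom.ker (ψ i)
  have hs : s.card = Module.finrank ℚ F := by
    rw [Finset.card_image_of_injective _ hker, Finset.card_univ, ← Nat.card_eq_fintype_card, hι]
  have hP : ∀ P ∈ s, P.IsPrime ∧ Ideal.absNorm P = q := by
    simp only [s, Finset.forall_mem_image]
    exact fun i _ ↦ ⟨RingHom.ker_isPrime _, absNorm_ker_ringHom_zmod _⟩
  exact ⟨s, hs, hP, span_natCast_eq_prod_of_absNorm_eq Fact.out hs fun P h ↦ (hP P h).2⟩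

end SplitsCompletely

section GaloisExtension

theorem natCard_algHom_eq_finrank_of_normal {k K L : Type*} [Field k] [Field K] [Field L]
    [Algebra k K] [Algebra k L] [FiniteDimensional k K] [Algebra.IsSeparable k K] [Normal k L]
    (f : K →ₐ[k] L) : Nat.card (K →ₐ[k] L) = Module.finrank k K :=
  AlgHom.natCard_of_splits k K L fun x ↦
    minpoly.algHom_eq f f.injective x ▸ Normal.splits inferInstance (f x)

theorem mapRingHom_injective {K L : Type*} [Field K] [NumberField K] [Field L] :
    Function.Injective (RingOfIntegers.mapRingHom : (K →+* L) → 𝓞 K →+* 𝓞 L) := fun _ _ h ↦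
  IsLocalization.ringHom_ext (nonZeroDivisors (𝓞 K)) <| RingHom.ext fun x ↦
    congrArg (algebraMap (𝓞 L) L) (RingHom.congr_fun h x)

theorem eventually_splitsCompletely_of_ringHom_zmod {F L : Type*} [Field F] [NumberField F]
    [Field L] [NumberField L] [IsGalois ℚ L] (f : F →ₐ[ℚ] L) :
    ∀ᶠ q : ℕ in atTop, q.Prime → (𝓞 L →+* ZMod q) → SplitsCompletely F q := by
  let g (σ : F →ₐ[ℚ] L) : 𝓞 F →+* 𝓞 L := RingOfIntegers.mapRingHom (σ : F →+* L)
  have hg : Function.Injective g := fun σ τ h ↦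
    AlgHom.coe_ringHom_injective (mapRingHom_injective h)
  filter_upwards [eventually_forall_injective_ringHom_zmod_comp hg] with q hinj hq φ
  have := Fact.mk hq
  exact splitsCompletely_of_injective (natCard_algHom_eq_finrank_of_normal f) (hinj φ)

universe u

theorem exists_isGalois_and_isPrimitiveRoot (F : Type u) [Field F] [NumberField F] {m : ℕ}
    (hm : m ≠ 0) :
    ∃ (L : Type u) (_ : Field L) (_ : NumberField L),
      IsGalois ℚ L ∧ Nonempty (F →ₐ[ℚ] L) ∧ ∃ ζ : 𝓞 L, IsPrimitiveRoot ζ m := by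
  have := NeZero.mk hm
  let K := CyclotomicField m F
  have : Normal ℚ (AlgebraicClosure K) :=
    have := IsAlgClosure.ofAlgebraic ℚ K (AlgebraicClosure K)
    IsAlgClosure.normal ℚ (AlgebraicClosure K)
  let L := IntermediateField.normalClosure ℚ K (AlgebraicClosure K)
  have hL : NumberField L := ⟨⟩
  have hnormal : Normal ℚ L := by
    convert normalClosure.normal ℚ K (AlgebraicClosure K)
    exact Subsingleton.elim (α := Algebra ℚ L) _ _
  have hζ := (IsCyclotomicExtension.zeta_spec m F K).map_of_injective (algebraMap K L).injective
  refine ⟨L, inferInstance, hL, ⟨⟩, ⟨?_⟩, hζ.toInteger, hζ.toInteger_isPrimitiveRoot⟩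
  exact (IsScalarTower.toAlgHom ℚ K L).comp (IsScalarTower.toAlgHom ℚ F K)

end GaloisExtension

theorem infinitely_many_split_primes_one_mod_pn_general (F : Type*) [Field F] [NumberField F]
    {m : ℕ} (hm : m ≠ 0) :
    {q : ℕ | q.Prime ∧ q ≡ 1 [MOD m] ∧ SplitsCompletely F q}.Infinite := by
  obtain ⟨L, _, _, _, ⟨f⟩, ζ, hζ⟩ := exists_isGalois_and_isPrimitiveRoot F hm
  refine Nat.frequently_atTop_iff_infinite.mp ?_
  refine ((frequently_prime_and_nonempty_ringHom_zmod L).and_eventually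
    ((eventually_splitsCompletely_of_ringHom_zmod f).and (eventually_gt_atTop m))).mono ?_
  rintro q ⟨⟨hq, ⟨φ⟩⟩, hsplit, hmq⟩
  have := Fact.mk hq
  have hqm : ¬ q ∣ m := Nat.not_dvd_of_pos_of_lt (Nat.pos_of_ne_zero hm) hmq
  exact ⟨hq, modEq_one_of_isPrimitiveRoot hqm hζ φ, hsplit hq φ⟩

/-- Let `F` be a number field in which the prime number `p` is unramified
(equivalently, the ideal `p 𝓞_F` is squarefree), and let `n ≥ 1`.  Then there exist
infinitely many prime numbers `q` such that `q ≡ 1 (mod pⁿ)` and `q` splits completely in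
`F`, i.e. `q 𝓞_F` factors as a product of `[F : ℚ]` distinct prime ideals of `𝓞_F`, each
with residue field of cardinality `q`. -/
theorem infinitely_many_split_primes_one_mod_pn
    (F : Type*) [Field F] [NumberField F]
    (p : ℕ) (hp : p.Prime)
    (hunr : Squarefree (Ideal.span {(p : 𝓞 F)} : Ideal (𝓞 F)))
    (n : ℕ) (hn : 1 ≤ n) :
    {q : ℕ | q.Prime ∧ q ≡ 1 [MOD p ^ n] ∧
      ∃ s : Finset (Ideal (𝓞 F)), s.card = Module.finrank ℚ F ∧
        (∀ P ∈ s, P.IsPrime ∧ Ideal.absNorm P = q) ∧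
        Ideal.span {(q : 𝓞 F)} = ∏ P ∈ s, P}.Infinite := by
  exact infinitely_many_split_primes_one_mod_pn_general F (pow_ne_zero n hp.ne_zero)
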